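/- Let k ≥ 6 and n ≥ 2k. Then there exist seven matrices M₁, …, M₇ in SL(n, ℤ), each of order exactly k, such that the subgroup they generate is all of SL(n, ℤ). -/

import Mathlib

/-!
A permutation of order `k` fixing some index lifts to a matrix of order `k` in `SL(n, ℤ)` by putting
its sign at the fixed index, and three such permutations, which rotate blocks of length `k`, act
transitively. If `N` lifts `σ` and `T` is a transvection, then the conjugate `T N T⁻¹` has order `k`
as well, and `N` and `T N T⁻¹` generate `[N, T]`, a product of two transvections. Two such products,
one supported in a row `z` and one in a column `o`, that overlap in a single index have as
commutator the transvection `1 ± E_{zo}`.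

Let `H` be the subgroup generated by the three lifts and two such conjugates. The relation
that `1 + c E_{ij} ∈ H` for all `c` is a preorder on the indices, because
`[1 + a E_{ij}, 1 + b E_{jl}] = 1 + ab E_{il}`, and it is invariant under the three permutations. As
these have finite order, relating `z` to its images already relates any two indices. So `H` contains
all transvections, and these generate `SL(n, ℤ)` by Euclid's algorithm.
-/

section Elementary

open Matrix Matrix.SpecialLinearGroup

variable {ι R : Type*} [Fintype ι] [DecidableEq ι]

variable (ι R) in
/-- The subgroup of `SL(ι, R)` generated by the transvections `1 + c · E_{ij}`, `i ≠ j`. -/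
def elementarySubgroup [CommRing R] : Subgroup (SpecialLinearGroup ι R) :=
  Subgroup.closure (Set.range TransvectionStruct.toSpecialLinearGroup)

/-- The matrices of `SL(ι, R)` fixing the standard basis vectors indexed by `S`, that is, whose
columns indexed by `S` are those of the identity matrix. -/
def basisStabilizer [CommRing R] (S : Finset ι) : Subgroup (SpecialLinearGroup ι R) :=
  fixingSubgroup (SpecialLinearGroup ι R) ((fun j ↦ (Pi.single j 1 : ι → R)) '' S)

section CommRing

variable [CommRing R] {S : Finset ι} {A : SpecialLinearGroup ι R}

lemma transvection_mem_elementarySubgroup {i j : ι} (hij : i ≠ j) (c : R) :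
    transvection hij c ∈ elementarySubgroup ι R :=
  Subgroup.subset_closure ⟨⟨i, j, hij, c⟩, rfl⟩

lemma mem_basisStabilizer_iff :
    A ∈ basisStabilizer S ↔ ∀ j ∈ S, ∀ i, A i j = (1 : Matrix ι ι R) i j := by
  simp only [basisStabilizer, mem_fixingSubgroup_iff, Set.forall_mem_image, Finset.mem_coe,
    Matrix.SpecialLinearGroup.smul_def, smul_eq_mulVec, mulVec_single_one, funext_iff, col_apply,
    one_eq_pi_single, Pi.single_comm]

lemma transvection_mem_basisStabilizer {i j : ι} (hij : i ≠ j) (hj : j ∉ S) (c : R) :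
    transvection hij c ∈ basisStabilizer S := by
  refine mem_basisStabilizer_iff.2 fun l hl r ↦ ?_
  have hjl : j ≠ l := (ne_of_mem_of_not_mem hl hj).symm
  simp [transvection_coe, single_apply_of_col_ne _ _ hjl]

lemma transvection_mul_apply_self {i j : ι} (hij : i ≠ j) (c : R) (l : ι) :
    (transvection hij c * A) i l = A i l + c * A j l :=
  transvection_mul_apply_same i j l c A.1

lemma transvection_mul_apply_of_ne_row {i j r : ι} (hij : i ≠ j) (hr : r ≠ i) (c : R) (l : ι) :
    (transvection hij c * A) r l = A r l :=
  transvection_mul_apply_of_ne i j r l hr c A.1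

lemma isUnit_of_forall_dvd_col {t : ι} {b : R} (hA : A ∈ basisStabilizer S) (ht : t ∉ S)
    (hb : ∀ i ∉ S, b ∣ A i t) : IsUnit b := by
  have hinv : ∀ i ∈ S, A⁻¹ t i = 0 := fun i hi ↦ by
    rw [mem_basisStabilizer_iff.1 (inv_mem hA) i hi, one_apply_ne]
    exact (ne_of_mem_of_not_mem hi ht).symm
  have hsum : ∑ i, A⁻¹ t i * A i t = 1 := by
    rw [← mul_apply, ← coe_mul, inv_mul_cancel, coe_one, one_apply_eq]
  rw [isUnit_iff_dvd_one, ← hsum]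
  refine Finset.dvd_sum fun i _ ↦ ?_
  by_cases hi : i ∈ S
  · simp [hinv i hi]
  · exact (hb i hi).mul_left _

lemma apply_self_eq_one_of_forall_ne_mem {t : ι} (hA : A ∈ basisStabilizer S)
    (hS : ∀ j ≠ t, j ∈ S) : A t t = 1 := by
  have hcol : A.1 = updateCol 1 t (A.1.col t) := by
    ext i j
    by_cases hj : j = t
    · simp [hj]
    · simp [hj, mem_basisStabilizer_iff.1 hA j (hS j hj)]
  have hdet := A.det_coe
  rwa [hcol, ← cramer_apply, cramer_one] at hdet

lemma exists_mul_forall_apply_eq_zero {t : ι} (hA : A t t = 1) (ht : t ∉ S) (U : Finset ι)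
    (hU : t ∉ U) :
    ∃ g ∈ elementarySubgroup ι R ⊓ basisStabilizer S,
      (g * A) t t = 1 ∧ ∀ i ∈ U, (g * A) i t = 0 := by
  induction U using Finset.induction_on with
  | empty => exact ⟨1, one_mem _, by simpa using hA, by simp⟩
  | insert i U _ ih =>
    obtain ⟨hti, hU⟩ := not_or.1 (Finset.mem_insert.not.1 hU)
    obtain ⟨g, hg, hgt, hgU⟩ := ih hU
    have hit : i ≠ t := Ne.symm hti
    refine ⟨transvection hit (-(g * A) i t) * g, mul_mem ⟨transvection_mem_elementarySubgroup _ _,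
      transvection_mem_basisStabilizer _ ht _⟩ hg, ?_, fun l hl ↦ ?_⟩
    · rw [mul_assoc, transvection_mul_apply_of_ne_row _ hti, hgt]
    · rw [mul_assoc]
      by_cases hli : l = i
      · rw [hli, transvection_mul_apply_self, hgt, mul_one, add_neg_cancel]
      · rw [transvection_mul_apply_of_ne_row _ hli]
        exact hgU l (Finset.mem_of_mem_insert_of_ne hl hli)

lemma exists_mul_apply_eq_one_of_isUnit {i j t : ι} (hi : i ∉ S) (hij : j ≠ i)
    (hunit : IsUnit (A i t)) :
    ∃ g ∈ elementarySubgroup ι R ⊓ basisStabilizer S, (g * A) j t = 1 := by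
  obtain ⟨v, hv⟩ := hunit.exists_left_inv
  refine ⟨transvection hij ((1 - A j t) * v), ⟨transvection_mem_elementarySubgroup _ _,
    transvection_mem_basisStabilizer _ hi _⟩, ?_⟩
  rw [transvection_mul_apply_self, mul_assoc, hv, mul_one, add_sub_cancel]

end CommRing

section EuclideanDomain

variable [EuclideanDomain R] {S : Finset ι} {t : ι}

lemma exists_mul_isUnit_apply {A : SpecialLinearGroup ι R} (hA : A ∈ basisStabilizer S)
    (ht : t ∉ S) :
    ∃ g ∈ elementarySubgroup ι R ⊓ basisStabilizer S, ∃ i ∉ S, IsUnit ((g * A) i t) := by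
  let entries : Set R := {x | x ≠ 0 ∧
    ∃ g ∈ elementarySubgroup ι R ⊓ basisStabilizer S, ∃ i ∉ S, (g * A) i t = x}
  have hne : entries.Nonempty := by
    by_contra! hempty
    refine not_isUnit_zero (isUnit_of_forall_dvd_col hA ht fun i hi ↦ zero_dvd_iff.2 ?_)
    by_contra hi0
    exact hempty.subset ⟨hi0, 1, one_mem _, i, hi, by rw [one_mul]⟩
  obtain ⟨x, ⟨hx, g, hg, i, hi, hgi⟩, hmin⟩ := EuclideanDomain.r_wellFounded.has_min entries hne
  refine ⟨g, hg, i, hi, isUnit_of_forall_dvd_col (mul_mem hg.2 hA) ht fun j hj ↦ ?_⟩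
  by_cases hji : j = i
  · rw [hji]
  rw [hgi, ← EuclideanDomain.mod_eq_zero]
  by_contra hmod
  refine hmin _ ⟨hmod, transvection hji (-((g * A) j t / x)) * g,
    mul_mem ⟨transvection_mem_elementarySubgroup _ _, transvection_mem_basisStabilizer _ hi _⟩ hg,
    j, hj, ?_⟩ (EuclideanDomain.mod_lt _ hx)
  rw [mul_assoc, transvection_mul_apply_self, hgi, EuclideanDomain.mod_eq_sub_mul_div]
  ring

lemma exists_mul_apply_self_eq_one {A : SpecialLinearGroup ι R} (hA : A ∈ basisStabilizer S)
    (ht : t ∉ S) :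
    ∃ g ∈ elementarySubgroup ι R ⊓ basisStabilizer S, (g * A) t t = 1 := by
  by_cases hlast : ∀ u ≠ t, u ∈ S
  · exact ⟨1, one_mem _, by rw [one_mul, apply_self_eq_one_of_forall_ne_mem hA hlast]⟩
  push Not at hlast
  obtain ⟨u, hut, hu⟩ := hlast
  obtain ⟨g, hg, i, hi, hunit⟩ := exists_mul_isUnit_apply hA ht
  obtain ⟨g', hg', j, hj, htj, hunit'⟩ : ∃ g' ∈ elementarySubgroup ι R ⊓ basisStabilizer S,
      ∃ j ∉ S, t ≠ j ∧ IsUnit ((g' * A) j t) := by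
    by_cases hit : t = i
    · subst hit
      obtain ⟨h, hh, hone⟩ := exists_mul_apply_eq_one_of_isUnit ht hut hunit
      exact ⟨h * g, mul_mem hh hg, u, hu, hut.symm, by rw [mul_assoc, hone]; exact isUnit_one⟩
    · exact ⟨g, hg, i, hi, hit, hunit⟩
  obtain ⟨h, hh, hone⟩ := exists_mul_apply_eq_one_of_isUnit hj htj hunit'
  exact ⟨h * g', mul_mem hh hg', by rwa [mul_assoc]⟩

lemma exists_mul_mem_basisStabilizer_insert {A : SpecialLinearGroup ι R}
    (hA : A ∈ basisStabilizer S) (ht : t ∉ S) :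
    ∃ g ∈ elementarySubgroup ι R, g * A ∈ basisStabilizer (insert t S) := by
  obtain ⟨g, hg, hone⟩ := exists_mul_apply_self_eq_one hA ht
  obtain ⟨h, hh, hone', hzero⟩ :=
    exists_mul_forall_apply_eq_zero hone ht (Finset.univ.erase t) (Finset.notMem_erase t _)
  refine ⟨h * g, mul_mem hh.1 hg.1, mem_basisStabilizer_iff.2 fun j hj i ↦ ?_⟩
  obtain rfl | hj := Finset.mem_insert.1 hj
  · rw [mul_assoc]
    by_cases hij : i = j
    · rw [hij, hone', one_apply_eq]
    · rw [hzero i (by simp [hij]), one_apply_ne hij]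
  · exact mem_basisStabilizer_iff.1 (mul_mem (mul_mem hh.2 hg.2) hA) j hj i

variable (ι R) in
theorem elementarySubgroup_eq_top : elementarySubgroup ι R = ⊤ := by
  have hreduce (S : Finset ι) (A : SpecialLinearGroup ι R) :
      ∃ g ∈ elementarySubgroup ι R, g * A ∈ basisStabilizer S := by
    induction S using Finset.induction_on with
    | empty => exact ⟨1, one_mem _, mem_basisStabilizer_iff.2 (by simp)⟩
    | insert t S ht ih =>
      obtain ⟨g, hg, hgA⟩ := ih
      obtain ⟨h, hh, hhA⟩ := exists_mul_mem_basisStabilizer_insert hgA ht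
      exact ⟨h * g, mul_mem hh hg, by rwa [mul_assoc]⟩
  refine (Subgroup.eq_top_iff' _).2 fun A ↦ ?_
  obtain ⟨g, hg, hgA⟩ := hreduce Finset.univ A
  have hone : g * A = 1 := by
    ext i j
    exact mem_basisStabilizer_iff.1 hgA j (Finset.mem_univ j) i
  exact (Subgroup.mul_mem_cancel_left _ hg).1 (hone ▸ one_mem _)

end EuclideanDomain

end Elementary

section InvariantPreorder

/-- Every point can be reached from `z` by applying permutations in `S`: a set that contains `z`
and is mapped into itself by each permutation in `S` is everything. -/
def ReachesAll {α : Type*} (S : Set (Equiv.Perm α)) (z : α) : Prop :=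
  ∀ A : Set α, z ∈ A → (∀ σ ∈ S, Set.MapsTo σ A A) → A = Set.univ

variable {α : Type*} [Finite α] {r : α → α → Prop} [Std.Refl r] [IsTrans α r]

lemma rel_apply_self_of_rel_apply {σ : Equiv.Perm α} (hσ : ∀ x y, r x y → r (σ x) (σ y)) {x : α}
    (hx : r x (σ x)) : r (σ x) x := by
  have hiter (m : ℕ) : r x ((σ ^ m) x) := by
    induction m with
    | zero => exact refl x
    | succ m ih =>
      rw [pow_succ', Equiv.Perm.mul_apply]
      exact _root_.trans hx (hσ _ _ ih)
  have hreturn := hσ _ _ (hiter (orderOf σ - 1))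
  rwa [← Equiv.Perm.mul_apply, mul_pow_sub_one (orderOf_pos σ).ne', pow_orderOf_eq_one,
    Equiv.Perm.one_apply] at hreturn

lemma ReachesAll.forall_rel {S : Set (Equiv.Perm α)} {z : α} (hS : ReachesAll S z)
    (hr : ∀ σ ∈ S, ∀ x y, r x y → r (σ x) (σ y)) (hz : ∀ σ ∈ S, r z (σ z)) (x y : α) : r x y := by
  have hfrom : {y | r z y} = Set.univ :=
    hS _ (refl z) fun σ hσ _ hy ↦ _root_.trans (hz σ hσ) (hr σ hσ _ _ hy)
  have hto : {x | r x z} = Set.univ :=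
    hS _ (refl z) fun σ hσ _ hx ↦
      _root_.trans (hr σ hσ _ _ hx) (rel_apply_self_of_rel_apply (hr σ hσ) (hz σ hσ))
  exact _root_.trans (Set.eq_univ_iff_forall.1 hto x) (Set.eq_univ_iff_forall.1 hfrom y)

end InvariantPreorder

section SignedPerm

open Matrix Matrix.SpecialLinearGroup Equiv.Perm

variable {ι R : Type*} [Fintype ι] [DecidableEq ι] [CommRing R]

lemma permMatrixHom_mul (σ : Equiv.Perm ι) (M : Matrix ι ι R) :
    permMatrixHom σ * M = M.submatrix σ.symm σ.symm * permMatrixHom σ := by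
  rw [permMatrixHom_apply, Equiv.Perm.inv_def, PEquiv.toMatrix_toPEquiv_mul,
    PEquiv.mul_toMatrix_toPEquiv, submatrix_submatrix, Equiv.symm_symm, Equiv.symm_comp_self,
    Function.comp_id]

lemma permMatrixHom_mul_transvection (σ : Equiv.Perm ι) (i j : ι) (c : R) :
    permMatrixHom σ * Matrix.transvection i j c =
      Matrix.transvection (σ i) (σ j) c * permMatrixHom σ := by
  simp only [permMatrixHom_mul, Matrix.transvection, submatrix_add, Pi.add_apply,
    submatrix_one_equiv, submatrix_single_equiv, Equiv.symm_symm]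

lemma diagonal_mul_transvection {w : ι → R} (hw : w * w = 1) (i j : ι) (c : R) :
    diagonal w * Matrix.transvection i j c =
      Matrix.transvection i j (w i * w j * c) * diagonal w := by
  have hwj : w j * w j = 1 := congrFun hw j
  have hentry : w i * c = w i * w j * c * w j := by linear_combination -(w i * c) * hwj
  simp only [Matrix.transvection, Matrix.mul_add, Matrix.add_mul, Matrix.mul_one, Matrix.one_mul]
  congr 1
  ext r s
  by_cases hrs : i = r ∧ j = s
  · obtain ⟨rfl, rfl⟩ := hrs
    simpa using hentry
  · simp [single_apply_of_ne _ _ _ _ _ hrs]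

/-- The weights turning a permutation matrix into a matrix of determinant `1`: the sign of `σ`
at `d`, and `1` elsewhere. -/
def signAt (R : Type*) [CommRing R] (d : ι) (σ : Equiv.Perm ι) : ι → R :=
  Pi.mulSingle d ((sign σ : ℤ) : R)

lemma signAt_of_ne {d i : ι} (σ : Equiv.Perm ι) (hi : i ≠ d) : signAt R d σ i = 1 :=
  Pi.mulSingle_eq_of_ne hi _

lemma signAt_mul (d : ι) (σ τ : Equiv.Perm ι) :
    signAt R d (σ * τ) = signAt R d σ * signAt R d τ := by
  simp [signAt, Pi.mulSingle_mul]

lemma signAt_mul_self (d : ι) (σ : Equiv.Perm ι) : signAt R d σ * signAt R d σ = 1 := by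
  rw [← signAt_mul]
  simp [signAt]

lemma isUnit_signAt (d : ι) (σ : Equiv.Perm ι) (i : ι) : IsUnit (signAt R d σ i) :=
  .of_mul_eq_one _ (congrFun (signAt_mul_self d σ) i)

lemma signAt_comp_symm {d : ι} (σ : Equiv.Perm ι) {τ : Equiv.Perm ι} (hτ : τ d = d) :
    signAt R d σ ∘ τ.symm = signAt R d σ := by
  ext i
  simp [signAt, Pi.mulSingle_apply, Equiv.symm_apply_eq, hτ]

variable (R) in
/-- The permutation matrix of `σ`, mapping the basis vector `e_i` to `e_{σ i}`, except that the
entry in column `d` is `sign σ`. Restricting to the permutations that fix `d` makes this a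
homomorphism. -/
def signedPerm (d : ι) : MulAction.stabilizer (Equiv.Perm ι) d →* SpecialLinearGroup ι R where
  toFun σ := ⟨permMatrixHom σ.1 * diagonal (signAt R d σ), by
    simp [signAt, ← Int.cast_mul, ← Units.val_mul]⟩
  map_one' := by
    ext
    simp [signAt]
  map_mul' σ τ := by
    have hcomm : diagonal (signAt R d σ) * permMatrixHom τ.1 =
        permMatrixHom τ.1 * diagonal (signAt R d σ) := by
      rw [permMatrixHom_mul, submatrix_diagonal_equiv, signAt_comp_symm _ τ.2]
    refine Subtype.ext ?_
    change permMatrixHom (σ.1 * τ.1) * diagonal (signAt R d (σ.1 * τ.1)) =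
      permMatrixHom σ.1 * diagonal (signAt R d σ) * (permMatrixHom τ.1 * diagonal (signAt R d τ))
    have hdiag : diagonal (signAt R d (σ.1 * τ.1)) =
        diagonal (signAt R d σ) * diagonal (signAt R d τ) := by
      rw [signAt_mul, diagonal_mul_diagonal]
      rfl
    rw [map_mul, hdiag, mul_assoc, mul_assoc, ← mul_assoc (diagonal _) (permMatrixHom _), hcomm,
      mul_assoc]

lemma signedPerm_coe (d : ι) (σ : MulAction.stabilizer (Equiv.Perm ι) d) :
    (signedPerm R d σ).1 = permMatrixHom σ.1 * diagonal (signAt R d σ) :=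
  rfl

lemma signedPerm_injective [Nontrivial R] (d : ι) : Function.Injective (signedPerm R d) := by
  refine (injective_iff_map_eq_one _).2 fun σ hσ ↦ Subtype.ext (Equiv.ext fun i ↦ ?_)
  by_contra! hi : σ.1 i ≠ i
  have hentry : (signedPerm R d σ) (σ.1 i) i = signAt R d σ i := by
    simp [signedPerm_coe, mul_diagonal, PEquiv.toMatrix_apply]
  rw [hσ, Matrix.SpecialLinearGroup.coe_one, one_apply_ne hi] at hentry
  exact (isUnit_signAt d σ.1 i).ne_zero hentry.symm

lemma orderOf_signedPerm [Nontrivial R] {d : ι} (σ : MulAction.stabilizer (Equiv.Perm ι) d) :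
    orderOf (signedPerm R d σ) = orderOf σ.1 :=
  (orderOf_injective _ (signedPerm_injective d) σ).trans (Subgroup.orderOf_coe σ).symm

lemma signedPerm_mul_transvection {d : ι} (σ : MulAction.stabilizer (Equiv.Perm ι) d) {i j : ι}
    (hij : i ≠ j) (c : R) :
    signedPerm R d σ * transvection hij c =
      transvection (σ.1.injective.ne hij) (signAt R d σ i * signAt R d σ j * c) *
        signedPerm R d σ := by
  refine Subtype.ext ?_
  change permMatrixHom σ.1 * diagonal (signAt R d σ) * Matrix.transvection i j c =
    Matrix.transvection (σ.1 i) (σ.1 j) _ * (permMatrixHom σ.1 * diagonal (signAt R d σ))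
  rw [mul_assoc, diagonal_mul_transvection (signAt_mul_self d σ.1), ← mul_assoc,
    permMatrixHom_mul_transvection, mul_assoc]

end SignedPerm

section Linked

open scoped commutatorElement

lemma commutator_mem_of_conj_mem {G : Type*} [Group G] {H : Subgroup G} {g t : G} (hg : g ∈ H)
    (hconj : t * g * t⁻¹ ∈ H) : ⁅g, t⁆ ∈ H := by
  rw [commutatorElement_def, mul_assoc, mul_assoc, ← mul_assoc t, ← conj_inv]
  exact H.mul_mem hg (H.inv_mem hconj)

open Matrix Matrix.SpecialLinearGroup

variable {ι R : Type*} [Fintype ι] [DecidableEq ι]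

section CommRing

variable [CommRing R] {H : Subgroup (SpecialLinearGroup ι R)}

/-- `i` and `j` are linked by `H` if `H` contains the whole root subgroup of transvections
`1 + c · E_{ij}`; in particular every index is linked to itself. -/
def Linked (H : Subgroup (SpecialLinearGroup ι R)) (i j : ι) : Prop :=
  ∀ (hij : i ≠ j) (c : R), transvection hij c ∈ H

lemma commutator_transvection {i j l : ι} (hij : i ≠ j) (hjl : j ≠ l) (hil : i ≠ l) (a b : R) :
    ⁅transvection hij a, transvection hjl b⁆ = transvection hil (a * b) := by
  rw [commutatorElement_def, mul_inv_eq_iff_eq_mul, mul_inv_eq_iff_eq_mul]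
  refine Subtype.ext ?_
  simp only [coe_mul, transvection_coe, mul_add, add_mul, mul_one, one_mul, add_zero, ne_eq,
    not_false_eq_true, single_mul_single_same, single_mul_single_of_ne, hjl.symm, hil.symm]
  abel

lemma commutator_transvection_mul_transvection {z o p q r : ι} (hzr : z ≠ r) (hzq : z ≠ q)
    (hqo : q ≠ o) (hpo : p ≠ o) (hzo : z ≠ o) (hrq : r ≠ q) (hrp : r ≠ p) (hqp : q ≠ p)
    (a b c d : R) :
    ⁅transvection hzr a * transvection hzq b, transvection hqo c * transvection hpo d⁆ =
      transvection hzo (b * c) := by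
  rw [commutatorElement_def, mul_inv_eq_iff_eq_mul, mul_inv_eq_iff_eq_mul]
  refine Subtype.ext ?_
  simp only [coe_mul, transvection_coe, mul_add, add_mul, mul_one, one_mul, add_zero, ne_eq,
    not_false_eq_true, single_mul_single_same, single_mul_single_of_ne, hzr.symm, hqo.symm,
    hpo.symm, hzo.symm, hrq, hrp, hqp]
  abel

instance linked_refl : Std.Refl (Linked H) := ⟨fun _ hii ↦ (hii rfl).elim⟩

instance linked_trans : IsTrans ι (Linked H) where
  trans i j l hij hjl hil c := by
    by_cases hij' : i = j
    · subst hij'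
      exact hjl hil c
    by_cases hjl' : j = l
    · subst hjl'
      exact hij hil c
    rw [← mul_one c, ← commutator_transvection hij' hjl' hil]
    exact H.commutator_le_self (Subgroup.commutator_mem_commutator (hij hij' c) (hjl hjl' 1))

lemma Linked.map_perm {d i j : ι} {σ : MulAction.stabilizer (Equiv.Perm ι) d} (h : Linked H i j)
    (hσ : signedPerm R d σ ∈ H) : Linked H (σ.1 i) (σ.1 j) := by
  intro hσij c
  have hij : i ≠ j := fun hij ↦ hσij (congrArg σ.1 hij)
  have hsq (l : ι) : signAt R d σ l * signAt R d σ l = 1 := congrFun (signAt_mul_self d σ.1) l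
  have hconj := signedPerm_mul_transvection σ hij (signAt R d σ i * signAt R d σ j * c)
  rw [show signAt R d σ i * signAt R d σ j * (signAt R d σ i * signAt R d σ j * c) = c by
    linear_combination c * signAt R d σ j * signAt R d σ j * hsq i + c * hsq j] at hconj
  exact (H.mul_mem_cancel_right hσ).1 (hconj ▸ H.mul_mem hσ (h hij _))

lemma commutator_signedPerm_transvection {d i j i' j' : ι}
    (σ : MulAction.stabilizer (Equiv.Perm ι) d) (hi : σ.1 i = i') (hj : σ.1 j = j')
    (hij : i ≠ j) (hij' : i' ≠ j') (c : R) :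
    ⁅signedPerm R d σ, transvection hij c⁆ =
      transvection hij' (signAt R d σ i * signAt R d σ j * c) * transvection hij (-c) := by
  subst hi hj
  rw [commutatorElement_def, signedPerm_mul_transvection, mul_inv_cancel_right, transvection_inv]

lemma transvection_mem_of_conj_mem {o z p : ι} {σ : MulAction.stabilizer (Equiv.Perm ι) o}
    (hzo : z ≠ o) (hpo : p ≠ o) (hz : σ.1 z = z) (hσp : σ.1 p ≠ p) (hσσp : σ.1 (σ.1 p) ≠ p)
    (hzq : z ≠ σ.1 p) (hσ : signedPerm R o σ ∈ H)
    (hrow : transvection hzq 1 * signedPerm R o σ * (transvection hzq 1)⁻¹ ∈ H)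
    (hcol : transvection hpo 1 * signedPerm R o σ * (transvection hpo 1)⁻¹ ∈ H) :
    transvection hzo (-signAt R o σ o) ∈ H := by
  have ho : σ.1 o = o := σ.2
  have hqo : σ.1 p ≠ o := fun h ↦ hpo (σ.1.injective (h.trans ho.symm))
  have hzr : z ≠ σ.1 (σ.1 p) := fun h ↦ hzq (σ.1.injective (hz.trans h))
  have hrq : σ.1 (σ.1 p) ≠ σ.1 p := σ.1.injective.ne hσp
  -- The two commutators lie in row `z` and column `o`, and overlap only in the index `σ p`.
  have hrowComm := commutator_mem_of_conj_mem hσ hrow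
  have hcolComm := commutator_mem_of_conj_mem hσ hcol
  rw [commutator_signedPerm_transvection σ hz rfl hzq hzr] at hrowComm
  rw [commutator_signedPerm_transvection σ rfl ho hpo hqo] at hcolComm
  have hcomm := H.commutator_le_self (Subgroup.commutator_mem_commutator hrowComm hcolComm)
  rwa [commutator_transvection_mul_transvection hzr hzq hqo hpo hzo hrq hσσp hσp,
    signAt_of_ne _ hpo, one_mul, mul_one, neg_one_mul] at hcomm

lemma transvection_zpow {i j : ι} (hij : i ≠ j) (c : R) (m : ℤ) :
    transvection hij c ^ m = transvection hij (m * c) := by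
  induction m with
  | zero => simp
  | succ m ih =>
    rw [_root_.zpow_add_one, ih, ← transvection_add, Int.cast_add, Int.cast_one, add_one_mul]
  | pred m ih =>
    rw [_root_.zpow_sub_one, ih, transvection_inv, ← transvection_add, Int.cast_sub, Int.cast_one,
      sub_one_mul, sub_eq_add_neg]

end CommRing

lemma linked_of_isUnit {H : Subgroup (SpecialLinearGroup ι ℤ)} {i j : ι} {hij : i ≠ j} {u : ℤ}
    (hu : IsUnit u) (h : transvection hij u ∈ H) : Linked H i j := by
  intro hij c
  obtain ⟨v, hv⟩ := hu.exists_left_inv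
  have hpow := H.zpow_mem h (c * v)
  rwa [transvection_zpow, Int.cast_id, mul_assoc, hv, mul_one] at hpow

lemma eq_top_of_forall_linked [EuclideanDomain R] {H : Subgroup (SpecialLinearGroup ι R)}
    (h : ∀ i j, Linked H i j) : H = ⊤ := by
  rw [eq_top_iff, ← elementarySubgroup_eq_top, elementarySubgroup, Subgroup.closure_le]
  rintro - ⟨t, rfl⟩
  exact h t.i t.j t.hij t.c

lemma eq_top_of_signedPerm_mem [EuclideanDomain R] {H : Subgroup (SpecialLinearGroup ι R)}
    {S : Set (Equiv.Perm ι)} {z : ι} (hS : ReachesAll S z)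
    (hmem : ∀ σ ∈ S, ∃ d, ∃ hd : σ ∈ MulAction.stabilizer _ d, signedPerm R d ⟨σ, hd⟩ ∈ H)
    (hz : ∀ σ ∈ S, Linked H z (σ z)) : H = ⊤ := by
  refine eq_top_of_forall_linked (hS.forall_rel (fun σ hσ x y hxy ↦ ?_) hz)
  obtain ⟨d, hd, hH⟩ := hmem σ hσ
  exact hxy.map_perm hH

lemma eq_top_of_conj_mem {H : Subgroup (SpecialLinearGroup ι ℤ)} {z o p d : ι}
    {σ₁ : MulAction.stabilizer (Equiv.Perm ι) d} {σ₂ : MulAction.stabilizer (Equiv.Perm ι) z}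
    {σ₃ : MulAction.stabilizer (Equiv.Perm ι) o} (hreach : ReachesAll {σ₁.1, σ₂.1, σ₃.1} z)
    (hσ₁z : σ₁.1 z = o) (hσ₃z : σ₃.1 z = z) (hzo : z ≠ o) (hpo : p ≠ o) (hσ₃p : σ₃.1 p ≠ p)
    (hσ₃σ₃p : σ₃.1 (σ₃.1 p) ≠ p) (hzq : z ≠ σ₃.1 p) (hσ₁ : signedPerm ℤ d σ₁ ∈ H)
    (hσ₂ : signedPerm ℤ z σ₂ ∈ H) (hσ₃ : signedPerm ℤ o σ₃ ∈ H)
    (hrow : transvection hzq 1 * signedPerm ℤ o σ₃ * (transvection hzq 1)⁻¹ ∈ H)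
    (hcol : transvection hpo 1 * signedPerm ℤ o σ₃ * (transvection hpo 1)⁻¹ ∈ H) : H = ⊤ := by
  have hlinked : Linked H z o :=
    linked_of_isUnit (isUnit_signAt o σ₃.1 o).neg
      (transvection_mem_of_conj_mem hzo hpo hσ₃z hσ₃p hσ₃σ₃p hzq hσ₃ hrow hcol)
  have hσ₂z : σ₂.1 z = z := σ₂.2
  refine eq_top_of_signedPerm_mem hreach ?_ ?_
  · rintro σ (rfl | rfl | rfl)
    exacts [⟨d, σ₁.2, hσ₁⟩, ⟨z, σ₂.2, hσ₂⟩, ⟨o, σ₃.2, hσ₃⟩]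
  · rintro σ (rfl | rfl | rfl)
    · rwa [hσ₁z]
    · rw [hσ₂z]
      exact refl z
    · rw [hσ₃z]
      exact refl z

end Linked

section BlockRotate

lemma orderOf_prodCongr_refl {α β : Type*} [Nonempty α] (e : Equiv.Perm β) :
    orderOf (Equiv.prodCongr (Equiv.refl α) e : Equiv.Perm (α × β)) = orderOf e := by
  let diag : Equiv.Perm β →* Equiv.Perm (α × β) :=
    { toFun := Equiv.prodCongr (Equiv.refl α), map_one' := rfl, map_mul' := fun _ _ ↦ rfl }
  refine orderOf_injective diag (fun e e' h ↦ Equiv.ext fun b ↦ ?_) e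
  exact congrArg Prod.snd (DFunLike.congr_fun h (Classical.arbitrary α, b))

lemma orderOf_finRotate {k : ℕ} (hk : 2 ≤ k) : orderOf (finRotate k) = k := by
  rw [(isCycle_finRotate_of_le hk).orderOf, support_finRotate_of_le hk, Finset.card_univ,
    Fintype.card_fin]

variable {n : ℕ} (s m k : ℕ) (h : s + m * k ≤ n)

/-- The embedding of `m` consecutive blocks of length `k` into `Fin n`, the first one starting at
`s`: the `b`-th place of the `a`-th block is `s + k * a + b`. -/
def blockEmbedding : Fin m × Fin k ↪ Fin n :=
  (finProdFinEquiv.toEmbedding.trans (Fin.natAddEmb s)).trans (Fin.castLEEmb h)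

/-- The permutation of `Fin n` that rotates each of `m` consecutive blocks of length `k`, the first
one starting at `s`, and fixes all other places. -/
noncomputable def blockRotate : Equiv.Perm (Fin n) :=
  Equiv.Perm.viaEmbedding (Equiv.prodCongr (Equiv.refl (Fin m)) (finRotate k))
    (blockEmbedding s m k h)

variable {s m k h}

lemma orderOf_blockRotate (hm : 0 < m) (hk : 2 ≤ k) : orderOf (blockRotate s m k h) = k := by
  have : Nonempty (Fin m) := Fin.pos_iff_nonempty.1 hm
  rw [blockRotate, ← Equiv.Perm.viaEmbeddingHom_apply,
    orderOf_injective _ (Equiv.Perm.viaEmbeddingHom_injective _), orderOf_prodCongr_refl,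
    orderOf_finRotate hk]

lemma val_blockEmbedding (a : Fin m) (b : Fin k) :
    (blockEmbedding s m k h (a, b)).val = s + (b + k * a) :=
  rfl

lemma blockRotate_eq_self {x : Fin n} (hx : x.val < s ∨ s + m * k ≤ x.val) :
    blockRotate s m k h x = x := by
  refine Equiv.Perm.viaEmbedding_apply_of_notMem _ _ _ ?_
  rintro ⟨p, rfl⟩
  have hval : (blockEmbedding s m k h p).val = s + (finProdFinEquiv p).val := rfl
  lia

lemma val_blockRotate {x : Fin n} (hs : s ≤ x.val) (hx : x.val < s + m * k)
    (hmod : (x.val - s) % k + 1 < k) : (blockRotate s m k h x).val = x.val + 1 := by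
  obtain ⟨k, rfl⟩ : ∃ l, k = l + 1 := ⟨k - 1, by lia⟩
  have hdecomp := Nat.mod_add_div (x.val - s) (k + 1)
  have hb := Nat.mod_lt (x.val - s) k.succ_pos
  have ha : (x.val - s) / (k + 1) < m := Nat.div_lt_of_lt_mul (by lia)
  have hxab : x = blockEmbedding s m (k + 1) h
      (⟨(x.val - s) / (k + 1), ha⟩, ⟨(x.val - s) % (k + 1), hb⟩) :=
    Fin.ext (by rw [val_blockEmbedding]; lia)
  nth_rw 1 [hxab]
  rw [blockRotate, Equiv.Perm.viaEmbedding_apply, Equiv.prodCongr_apply, Prod.map_apply,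
    finRotate_of_lt (by lia), val_blockEmbedding, Equiv.refl_apply]
  lia

lemma reachesAll_blockRotate {k m n : ℕ} {h₁ : 0 + m * k ≤ n} {h₂ : 1 + m * k ≤ n}
    {h₃ : n - k + 1 * k ≤ n} (hk : 2 ≤ k) (hn : n ≤ m * k + k) :
    ReachesAll {blockRotate 0 m k h₁, blockRotate 1 m k h₂, blockRotate (n - k) 1 k h₃}
      ⟨0, by lia⟩ := by
  intro A hzero hA
  have hmem (x : ℕ) (hx : x < n) : ⟨x, hx⟩ ∈ A := by
    induction x with
    | zero => exact hzero
    | succ x ih =>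
      suffices hσ : ∃ σ ∈ ({blockRotate 0 m k h₁, blockRotate 1 m k h₂,
          blockRotate (n - k) 1 k h₃} : Set (Equiv.Perm (Fin n))),
          (σ ⟨x, by lia⟩).val = x + 1 by
        obtain ⟨σ, hσS, hσx⟩ := hσ
        rw [show ⟨x + 1, hx⟩ = σ ⟨x, by lia⟩ from Fin.ext hσx.symm]
        exact hA σ hσS (ih (by lia))
      -- For `x < n - k` the blocks starting at `0` move `x` to `x + 1` unless `x` ends one of them,
      -- and then the blocks starting at `1` do.
      by_cases hlast : n - k ≤ x
      · refine ⟨_, .inr (.inr rfl), val_blockRotate hlast (show x < n - k + 1 * k by lia) ?_⟩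
        rw [Nat.mod_eq_of_lt] <;> lia
      by_cases hmod : x % k + 1 < k
      · exact ⟨_, .inl rfl, val_blockRotate x.zero_le (show x < 0 + m * k by lia) hmod⟩
      · have hdecomp := Nat.mod_add_div x k
        have hmodlt := Nat.mod_lt x (show 0 < k by lia)
        have hpred : x - 1 = k - 2 + k * (x / k) := by lia
        refine ⟨_, .inr (.inl rfl),
          val_blockRotate (show 1 ≤ x by lia) (show x < 1 + m * k by lia) ?_⟩
        rw [hpred, Nat.add_mul_mod_self_left, Nat.mod_eq_of_lt] <;> lia
  exact Set.eq_univ_of_forall fun x ↦ hmem x x.isLt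

lemma exists_reachesAll_orderOf_eq {k n : ℕ} (hk : 3 ≤ k) (hn : k + 2 ≤ n) :
    ∃ (z o p d : Fin n) (σ₁ : MulAction.stabilizer (Equiv.Perm (Fin n)) d)
      (σ₂ : MulAction.stabilizer (Equiv.Perm (Fin n)) z)
      (σ₃ : MulAction.stabilizer (Equiv.Perm (Fin n)) o),
      orderOf σ₁.1 = k ∧ orderOf σ₂.1 = k ∧ orderOf σ₃.1 = k ∧
      ReachesAll {σ₁.1, σ₂.1, σ₃.1} z ∧ σ₁.1 z = o ∧ σ₃.1 z = z ∧
      z ≠ o ∧ p ≠ o ∧ σ₃.1 p ≠ p ∧ σ₃.1 (σ₃.1 p) ≠ p ∧ z ≠ σ₃.1 p := by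
  obtain ⟨m, hm, hmn, hnm⟩ : ∃ m, 0 < m ∧ 1 + m * k ≤ n ∧ n ≤ m * k + k := by
    have hdecomp := Nat.mod_add_div (n - 1) k
    have hmodlt := Nat.mod_lt (n - 1) (show 0 < k by lia)
    exact ⟨(n - 1) / k, Nat.div_pos (by lia) (by lia), by lia, by lia⟩
  have hkm : k ≤ m * k := Nat.le_mul_of_pos_left k hm
  have h₃ : n - k + 1 * k ≤ n := by lia
  have hp : (blockRotate (n - k) 1 k h₃ ⟨n - k, by lia⟩).val = n - k + 1 :=
    val_blockRotate le_rfl (show n - k < n - k + 1 * k by lia)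
      (by rw [Nat.sub_self, Nat.zero_mod]; lia)
  have hpp : (blockRotate (n - k) 1 k h₃ (blockRotate (n - k) 1 k h₃ ⟨n - k, by lia⟩)).val =
      n - k + 2 := by
    rw [val_blockRotate, hp] <;> rw [hp]
    · lia
    · lia
    · rw [Nat.add_sub_cancel_left, Nat.mod_eq_of_lt] <;> lia
  refine ⟨⟨0, by lia⟩, ⟨1, by lia⟩, ⟨n - k, by lia⟩, ⟨n - 1, by lia⟩,
    ⟨blockRotate 0 m k (by lia), blockRotate_eq_self (.inr (show 0 + m * k ≤ n - 1 by lia))⟩,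
    ⟨blockRotate 1 m k hmn, blockRotate_eq_self (.inl Nat.one_pos)⟩,
    ⟨blockRotate (n - k) 1 k h₃, blockRotate_eq_self (.inl (show 1 < n - k by lia))⟩,
    orderOf_blockRotate hm (by lia), orderOf_blockRotate hm (by lia),
    orderOf_blockRotate Nat.one_pos (by lia), reachesAll_blockRotate (by lia) hnm,
    Fin.ext (val_blockRotate le_rfl (show 0 < 0 + m * k by lia) ?_),
    blockRotate_eq_self (.inl (show 0 < n - k by lia)), ?_⟩
  · change 0 % k + 1 < k
    rw [Nat.zero_mod]
    lia
  · simp only [ne_eq, Fin.ext_iff, hp, hpp]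
    lia

end BlockRotate

lemma orderOf_conj {G : Type*} [Group G] (t g : G) : orderOf (t * g * t⁻¹) = orderOf g :=
  (MulAut.conj t).orderOf_eq g

open Matrix.SpecialLinearGroup in
theorem SL_n_Z_generated_by_seven_elements_of_order_k_general
    (k n : ℕ) (hk : 3 ≤ k) (hn : k + 2 ≤ n) :
    ∃ M₁ M₂ M₃ M₄ M₅ : Matrix.SpecialLinearGroup (Fin n) ℤ,
      orderOf M₁ = k ∧ orderOf M₂ = k ∧ orderOf M₃ = k ∧ orderOf M₄ = k ∧ orderOf M₅ = k ∧
      Subgroup.closure {M₁, M₂, M₃, M₄, M₅} = ⊤ := by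
  obtain ⟨z, o, p, d, σ₁, σ₂, σ₃, hord₁, hord₂, hord₃, hreach, hσ₁z, hσ₃z, hzo, hpo, hσ₃p, hσ₃σ₃p,
    hzq⟩ := exists_reachesAll_orderOf_eq hk hn
  have hord : orderOf (signedPerm ℤ o σ₃) = k := (orderOf_signedPerm σ₃).trans hord₃
  refine ⟨signedPerm ℤ d σ₁, signedPerm ℤ z σ₂, signedPerm ℤ o σ₃,
    transvection hzq 1 * signedPerm ℤ o σ₃ * (transvection hzq 1)⁻¹,
    transvection hpo 1 * signedPerm ℤ o σ₃ * (transvection hpo 1)⁻¹,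
    (orderOf_signedPerm σ₁).trans hord₁, (orderOf_signedPerm σ₂).trans hord₂, hord,
    (orderOf_conj _ _).trans hord, (orderOf_conj _ _).trans hord, ?_⟩
  apply eq_top_of_conj_mem hreach hσ₁z hσ₃z hzo hpo hσ₃p hσ₃σ₃p hzq <;>
    exact Subgroup.subset_closure (by simp)

/-- For `k ≥ 6` and `n ≥ 2k`, the group `SL(n, ℤ)` is generated by seven
elements of order exactly `k`. -/
theorem SL_n_Z_generated_by_seven_elements_of_order_k
    (k n : ℕ) (hk : 6 ≤ k) (hn : 2 * k ≤ n) :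
    ∃ M₁ M₂ M₃ M₄ M₅ M₆ M₇ : Matrix.SpecialLinearGroup (Fin n) ℤ,
      orderOf M₁ = k ∧ orderOf M₂ = k ∧ orderOf M₃ = k ∧ orderOf M₄ = k ∧
      orderOf M₅ = k ∧ orderOf M₆ = k ∧ orderOf M₇ = k ∧
      Subgroup.closure {M₁, M₂, M₃, M₄, M₅, M₆, M₇} = ⊤ := by
  obtain ⟨M₁, M₂, M₃, M₄, M₅, h₁, h₂, h₃, h₄, h₅, htop⟩ :=
    SL_n_Z_generated_by_seven_elements_of_order_k_general k n (by lia) (by lia)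
  exact ⟨M₁, M₂, M₃, M₄, M₅, M₅, M₅, h₁, h₂, h₃, h₄, h₅, h₅, h₅, by simpa using htop⟩
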